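/- Assume the number-field distortion setup. Then for every integer k ≥ 1 and every 1 ≤ j ≤ J, Σ_{x ∈ O_K/Q} α_j(x)^k P_{j−1}(x) ≤ s^k · Σ_{1 ≤ r_1, …, r_k ≤ ν_j} Σ_{(H_1, …, H_k)} [ 1/( N(H_1 ∩ ⋯ ∩ H_k) · N(p_j)^{r_1 + ⋯ + r_k} ) ] · ∏_{1 ≤ i ≤ j−1, p_i | H_1 ∩ ⋯ ∩ H_k} (1 − δ_i)^{−1}, where the inner sum is over k-tuples of ideals H_1, …, H_k of O_K dividing Q_{j−1} and satisfying N(H_ℓ · p_j^{r_ℓ}) ≥ N(I_1) for every 1 ≤ ℓ ≤ k. -/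

import Mathlib

/-!
Write `V = Q_{j-1}`. An ideal `I_i` with largest prime `p_j` factors as `H_i * p_j ^ r_i` with
`H_i ∣ V` and `1 ≤ r_i ≤ ν_j`. Since `p_j` is coprime to `V`, the class `a_i + I_i` either misses
the fibre `x + V` or, exactly when `x ≡ a_i` modulo `H_i`, covers a proportion `N(p_j) ^ (-r_i)`
of it. The union bound gives `α_j(x) ≤ ∑_i 1[x ≡ a_i mod H_i] * N(p_j) ^ (-r_i)`
(`proportion_le`). Expanding the `k`-th power produces, for each `k`-tuple of indices, the
`P_{j-1}`-measure of a set that is empty or a coset of `H_1 ∩ ⋯ ∩ H_k`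
(`sum_prod_indicator_le`). Each pair of tuples `(H, r)` determines the ideals `I_i` and therefore
comes from at most `s ^ k` index tuples.

It remains to bound `P_m(b + H)` by `N(H)⁻¹ * ∏_{p_i ∣ H} (1 - δ_i)⁻¹` for `H ∣ Q_m`
(`measure_coset_le`), by induction on `m`. The inputs are that `P_m` is `Q_m`-periodic, that step
`m` preserves the mass of each fibre of `π_{m-1}`, and that it increases no mass by more than
`(1 - δ_m)⁻¹` (`distortion_step`).

Both counting arguments rest on one identity (`sum_coset_of_periodic`): if `A' = A + V`, a
`V`-periodic function has the same average over `b + A'` as over the coset `b + A` inside it.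
-/

set_option maxHeartbeats 1000000
set_option synthInstance.maxHeartbeats 1000000

open scoped Classical
open NumberField

/-- `p` is the unique prime ideal factor of `I` of largest norm. -/
def IsPmin {K : Type*} [Field K] [NumberField K] (I p : Ideal (𝓞 K)) : Prop :=
  p.IsPrime ∧ p ∣ I ∧ ∀ q : Ideal (𝓞 K), q.IsPrime → q ∣ I → q ≠ p →
    Ideal.absNorm q < Ideal.absNorm p

/-- A nonzero proper ideal is distinguishable if it has a unique prime factor of largest norm. -/
def Distinguishable {K : Type*} [Field K] [NumberField K] (I : Ideal (𝓞 K)) : Prop :=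
  I ≠ ⊥ ∧ I ≠ ⊤ ∧ ∃ p : Ideal (𝓞 K), IsPmin I p


/-! ### Sums over cosets in a finite ring -/

section Cosets

variable {G : Type*} [CommRing G] [Fintype G]

lemma card_coset (V : Ideal G) (x : G) :
    (Finset.univ.filter fun y : G => y - x ∈ V).card = Nat.card V := by
  rw [← Fintype.card_subtype, ← Nat.card_eq_fintype_card]
  exact Nat.card_congr ⟨fun y => ⟨y.1 - x, y.2⟩, fun v => ⟨v.1 + x, by simp⟩,
    fun y => by simp, fun v => by simp⟩

/-- Summing the `A`-coset sums of `g` over the points of a coset of a larger ideal `A'` counts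
every value of `g` exactly `|A|` times. -/
lemma sum_coset_sum {A A' : Ideal G} (hA : A ≤ A') (g : G → ℝ) (b : G) :
    ∑ y with y - b ∈ A', ∑ x with x - y ∈ A, g x =
      (Nat.card A : ℝ) * ∑ x with x - b ∈ A', g x := by
  rw [Finset.sum_comm' (t' := Finset.univ.filter fun x => x - b ∈ A')
    (s' := fun x => Finset.univ.filter fun y => y - x ∈ A)]
  · rw [Finset.mul_sum]
    refine Finset.sum_congr rfl fun x _ => ?_
    rw [Finset.sum_const, card_coset, nsmul_eq_mul]
  · intro y x
    simp only [Finset.mem_filter, Finset.mem_univ, true_and]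
    constructor
    · rintro ⟨h1, h2⟩
      refine ⟨by rw [← neg_sub]; exact A.neg_mem h2, ?_⟩
      have := A'.add_mem h1 (hA h2)
      simpa using this
    · rintro ⟨h1, h2⟩
      refine ⟨?_, by rw [← neg_sub]; exact A.neg_mem h1⟩
      have := A'.add_mem h2 (hA h1)
      simpa using this

/-- If `A' = A + V` and `g` is `V`-periodic, then `g` has the same average over a coset of `A'`
and over the coset of `A` inside it: the `A`-coset sum is both `A`- and `V`-periodic. -/
lemma sum_coset_of_periodic {A A' V : Ideal G} (hA : A ≤ A') (hAV : A' ≤ A ⊔ V) (g : G → ℝ)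
    (hg : ∀ x x', x' - x ∈ V → g x' = g x) (b : G) :
    (Nat.card A' : ℝ) * ∑ x with x - b ∈ A, g x =
      (Nat.card A : ℝ) * ∑ x with x - b ∈ A', g x := by
  rw [← sum_coset_sum hA, ← card_coset A' b, ← nsmul_eq_mul, ← Finset.sum_const]
  refine Finset.sum_congr rfl fun y hy => ?_
  simp only [Finset.mem_filter, Finset.mem_univ, true_and] at hy
  obtain ⟨c, hc, v, hv, hcv⟩ := Submodule.mem_sup.1 (hAV hy)
  refine Finset.sum_bij' (fun x _ => x + v) (fun x _ => x - v) ?_ ?_ ?_ ?_ ?_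
  · intro x hx
    simp only [Finset.mem_filter, Finset.mem_univ, true_and] at hx ⊢
    have : x + v - y = (x - b) - c := by linear_combination hcv
    rw [this]; exact A.sub_mem hx hc
  · intro x hx
    simp only [Finset.mem_filter, Finset.mem_univ, true_and] at hx ⊢
    have : x - v - b = (x - y) + c := by linear_combination -hcv
    rw [this]; exact A.add_mem hx hc
  · intros; simp
  · intros; simp
  · intro x _
    exact (hg _ _ (by simpa using hv)).symm

end Cosets

/-! ### Ideals of `𝓞 K` and their images modulo `Q` -/

section Ideals

variable {K : Type*} [Field K] [NumberField K]

lemma card_map_mul_absNorm {Q I : Ideal (𝓞 K)} [Fintype (𝓞 K ⧸ Q)] (h : Q ≤ I) :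
    Nat.card (I.map (Ideal.Quotient.mk Q)) * Ideal.absNorm I = Fintype.card (𝓞 K ⧸ Q) := by
  rw [← Nat.card_eq_fintype_card,
    Submodule.card_eq_card_quotient_mul_card (I.map (Ideal.Quotient.mk Q)),
    Ideal.absNorm_apply, Submodule.cardQuot_apply]
  congr 1
  exact (Nat.card_congr (DoubleQuot.quotQuotEquivQuotOfLE h).toEquiv).symm

/-- Refining a coset of `H` to a coset of `H * T`, where `T` is coprime to a multiple `V` of `H`,
divides the sum of a `V`-periodic function by the norm of `T`. -/
lemma sum_coset_mul {Q V H T : Ideal (𝓞 K)} [Fintype (𝓞 K ⧸ Q)] (hQ : Q ≠ ⊥)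
    (hV : H ∣ V) (hT : T ⊔ V = ⊤) (hHT : H * T ∣ Q)
    (g : 𝓞 K ⧸ Q → ℝ)
    (hg : ∀ x x', x' - x ∈ V.map (Ideal.Quotient.mk Q) → g x' = g x) (b : 𝓞 K ⧸ Q) :
    ∑ x with x - b ∈ (H * T).map (Ideal.Quotient.mk Q), g x =
      (∑ x with x - b ∈ H.map (Ideal.Quotient.mk Q), g x) / (Ideal.absNorm T : ℝ) := by
  have h1 : (H * T).map (Ideal.Quotient.mk Q) ≤ H.map (Ideal.Quotient.mk Q) :=
    Ideal.map_mono Ideal.mul_le_left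
  have h2 : H.map (Ideal.Quotient.mk Q) ≤
      (H * T).map (Ideal.Quotient.mk Q) ⊔ V.map (Ideal.Quotient.mk Q) := by
    rw [← Ideal.map_sup]
    apply Ideal.map_mono
    obtain ⟨W, rfl⟩ := hV
    rw [← Ideal.mul_sup]
    have : T ⊔ W = ⊤ := by
      rw [eq_top_iff, ← hT]; exact sup_le_sup_left Ideal.mul_le_right _
    rw [this, Ideal.mul_top]
  have key := sum_coset_of_periodic h1 h2 g hg b
  have c1 := card_map_mul_absNorm (Ideal.dvd_iff_le.1 hHT)
  have c2 := card_map_mul_absNorm (Ideal.dvd_iff_le.1 ((Dvd.intro _ rfl : H ∣ H * T).trans hHT))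
  rw [map_mul] at c1
  have hne : H * T ≠ ⊥ := fun h => hQ (by rw [h] at hHT; exact zero_dvd_iff.1 hHT)
  have hH : Ideal.absNorm H ≠ 0 := by
    rw [Ne, Ideal.absNorm_eq_zero_iff]; rintro rfl; exact hne (by simp)
  have hT0 : Ideal.absNorm T ≠ 0 := by
    rw [Ne, Ideal.absNorm_eq_zero_iff]; rintro rfl; exact hne (by simp)
  have c3 : Nat.card (H.map (Ideal.Quotient.mk Q)) =
      Nat.card ((H * T).map (Ideal.Quotient.mk Q)) * Ideal.absNorm T := by
    apply Nat.eq_of_mul_eq_mul_right (Nat.pos_of_ne_zero hH)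
    rw [c2, ← c1]; ring
  have hc : (Nat.card ((H * T).map (Ideal.Quotient.mk Q)) : ℝ) ≠ 0 := by
    exact_mod_cast Nat.card_pos.ne'
  rw [c3] at key
  push_cast at key
  rw [eq_div_iff (by exact_mod_cast hT0)]
  apply mul_left_cancel₀ hc
  linear_combination key

/-- A divisor of `V * p ^ e`, with `p` prime, splits as a divisor of `V` times a power of `p`. -/
lemma exists_split {V p I : Ideal (𝓞 K)} {e : ℕ} (hp : Prime p) (h : I ∣ V * p ^ e) :
    ∃ H r, H ∣ V ∧ r ≤ e ∧ I = H * p ^ r := by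
  obtain ⟨H, T, hH, hT, rfl⟩ := exists_dvd_and_dvd_of_dvd_mul h
  obtain ⟨r, hr, hTr⟩ := (dvd_prime_pow hp e).1 hT
  exact ⟨H, r, hH, hr, by rw [associated_iff_eq.1 hTr]⟩

end Ideals

/-! ### The distortion step and the measure of a coset -/

section Distortion

/-- One step of the distortion, along the fibres `x + V`, from a `V`-periodic measure `P` to
`P'`: the covered proportion `α` is `V`-periodic, positivity is kept, no mass grows by a factor above `(1 - δ)⁻¹`, and the mass of every
fibre is unchanged. -/
lemma distortion_step {G : Type*} [CommRing G] [Fintype G] (V : Ideal G) (B : Finset G)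
    (P P' α : G → ℝ) (δ : ℝ) (hδ : δ ∈ Set.Icc (0 : ℝ) (1 / 2))
    (hα : ∀ x, α x = (((Finset.univ.filter fun x' => x' - x ∈ V) ∩ B).card : ℝ) /
      ((Finset.univ.filter fun x' => x' - x ∈ V).card : ℝ))
    (hP' : ∀ x, P' x = if α x < δ then (if x ∈ B then 0 else P x / (1 - α x))
        else if α x = 0 then P x
        else P x * (α x - (if x ∈ B then δ else 0)) / (α x * (1 - δ)))
    (hper : ∀ x x', x' - x ∈ V → P x' = P x) (hnn : ∀ x, 0 ≤ P x) :
    (∀ x x', x' - x ∈ V → α x' = α x) ∧ (∀ x, 0 ≤ P' x) ∧ (∀ x, P' x ≤ (1 - δ)⁻¹ * P x) ∧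
      ∀ x, ∑ x' with x' - x ∈ V, P' x' = ∑ x' with x' - x ∈ V, P x' := by
  obtain ⟨hδ0, hδ1⟩ := hδ
  have hα0 : ∀ x, 0 ≤ α x := fun x => by rw [hα]; positivity
  have hαper : ∀ x x', x' - x ∈ V → α x' = α x := by
    intro x x' h
    have : (Finset.univ.filter fun y => y - x' ∈ V) = Finset.univ.filter fun y => y - x ∈ V := by
      ext y
      simp only [Finset.mem_filter, Finset.mem_univ, true_and]
      constructor
      · intro hy; simpa using V.add_mem hy h
      · intro hy; simpa using V.sub_mem hy h
    rw [hα, hα, this]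
  refine ⟨hαper, ?_, ?_, ?_⟩
  · intro x
    rw [hP']
    split_ifs with h1 h2 h3 h4
    · exact le_rfl
    · exact div_nonneg (hnn x) (by linarith)
    · exact hnn x
    · exact div_nonneg (mul_nonneg (hnn x) (by linarith)) (mul_nonneg (hα0 x) (by linarith))
    · exact div_nonneg (mul_nonneg (hnn x) (by linarith [hα0 x]))
        (mul_nonneg (hα0 x) (by linarith))
  · intro x
    have hd : (0 : ℝ) < 1 - δ := by linarith
    rw [hP', inv_mul_eq_div]
    split_ifs with h1 h2 h3 h4
    · exact div_nonneg (hnn x) hd.le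
    · exact div_le_div_of_nonneg_left (hnn x) hd (by linarith)
    · rw [le_div_iff₀ hd]
      nlinarith [hnn x]
    · have hpos : 0 < α x := lt_of_le_of_ne (hα0 x) (Ne.symm h3)
      rw [div_le_div_iff₀ (mul_pos hpos hd) hd]
      nlinarith [mul_nonneg (mul_nonneg (hnn x) hδ0) hd.le]
    · have hpos : 0 < α x := lt_of_le_of_ne (hα0 x) (Ne.symm h3)
      rw [div_le_div_iff₀ (mul_pos hpos hd) hd]
      exact le_of_eq (by ring)
  · intro x
    set S := Finset.univ.filter fun x' => x' - x ∈ V with hS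
    have hmem : ∀ x' ∈ S, x' - x ∈ V := fun x' h => by simpa [hS] using h
    have hxS : x ∈ S := by simp [hS]
    have hScard : (0 : ℝ) < S.card := by exact_mod_cast Finset.card_pos.2 ⟨x, hxS⟩
    have hαS : ((S ∩ B).card : ℝ) = α x * S.card := by
      rw [hα x, div_mul_cancel₀ _ hScard.ne']
    rw [Finset.sum_congr rfl fun x' h => hper x x' (hmem x' h), Finset.sum_const, nsmul_eq_mul]
    -- On the fibre `α` and `P` are constant, so `P'` depends only on membership in `B`.
    have hind : ∀ u v : ℝ, ∑ x' ∈ S, (if x' ∈ B then u else v) =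
        α x * S.card * u + (S.card - α x * S.card) * v := by
      intro u v
      have : ∀ x', (if x' ∈ B then u else v) = v + (if x' ∈ B then u - v else 0) := by
        intro x'; split_ifs <;> ring
      simp_rw [this]
      rw [Finset.sum_add_distrib, Finset.sum_const, nsmul_eq_mul, ← Finset.sum_filter,
        Finset.filter_mem_eq_inter, Finset.sum_const, nsmul_eq_mul, hαS]
      ring
    have hrw : ∀ x' ∈ S, P' x' = if α x < δ then (if x' ∈ B then 0 else P x / (1 - α x))
        else if α x = 0 then P x
        else (if x' ∈ B then P x * (α x - δ) / (α x * (1 - δ))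
          else P x * α x / (α x * (1 - δ))) := by
      intro x' h
      rw [hP', hαper x x' (hmem x' h), hper x x' (hmem x' h)]
      split_ifs <;> simp
    rw [Finset.sum_congr rfl hrw]
    split_ifs with h1 h2
    · rw [hind]
      have e : ∀ A c q : ℝ, 1 - A ≠ 0 → A * c * 0 + (c - A * c) * (q / (1 - A)) = c * q := by
        intro A c q h
        field_simp
        ring
      exact e _ _ _ (by linarith)
    · rw [Finset.sum_const, nsmul_eq_mul]
    · rw [hind]
      have e : ∀ A c q : ℝ, A ≠ 0 → 1 - δ ≠ 0 → A * c * (q * (A - δ) / (A * (1 - δ))) +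
          (c - A * c) * (q * A / (A * (1 - δ))) = c * q := by
        intro A c q h h'
        field_simp
        ring
      exact e _ _ _ h2 (by linarith)

/-- The `m`-th measure gives a coset of a divisor `H` of `Q_m` at most its uniform mass times
`∏ (1 - δ_i)⁻¹` over the primes `p_i` dividing `H`. By induction on `m`: if `p_m ∤ H` the coset is
a union of fibres whose mass step `m` preserves, and if `H = H' * p_m ^ r` with `r ≥ 1`, step `m`
costs `(1 - δ_m)⁻¹` and passing from `H'` to `H` gains exactly `N(p_m) ^ (-r)`. -/
lemma measure_coset_le {K : Type*} [Field K] [NumberField K] {Q : Ideal (𝓞 K)}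
    [Fintype (𝓞 K ⧸ Q)] (hQ0 : Q ≠ ⊥) {J : ℕ} {p : ℕ → Ideal (𝓞 K)} {ν : ℕ → ℕ}
    (hp : ∀ i ∈ Finset.Icc 1 J, Prime (p i)) (Qp : ℕ → Ideal (𝓞 K))
    (hQp0 : Qp 0 = ⊤)
    (hQps : ∀ m, m + 1 ∈ Finset.Icc 1 J → Qp (m + 1) = Qp m * p (m + 1) ^ ν (m + 1))
    (hcop : ∀ m, m + 1 ∈ Finset.Icc 1 J → ∀ r, p (m + 1) ^ r ⊔ Qp m = ⊤)
    (hdvd : ∀ m ≤ J, Qp m ∣ Q)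
    {δ : ℕ → ℝ} (hδ : ∀ i ∈ Finset.Icc 1 J, δ i ∈ Set.Icc (0 : ℝ) (1 / 2))
    {P : ℕ → (𝓞 K ⧸ Q) → ℝ}
    (hP0 : ∀ x, P 0 x = 1 / (Fintype.card (𝓞 K ⧸ Q) : ℝ))
    (hper : ∀ m ≤ J, ∀ x x', x' - x ∈ (Qp m).map (Ideal.Quotient.mk Q) → P m x' = P m x)
    (hle : ∀ m, m + 1 ∈ Finset.Icc 1 J → ∀ x, P (m + 1) x ≤ (1 - δ (m + 1))⁻¹ * P m x)
    (hfib : ∀ m, m + 1 ∈ Finset.Icc 1 J → ∀ x,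
      ∑ x' with x' - x ∈ (Qp m).map (Ideal.Quotient.mk Q), P (m + 1) x' =
        ∑ x' with x' - x ∈ (Qp m).map (Ideal.Quotient.mk Q), P m x') :
    ∀ m ≤ J, ∀ H : Ideal (𝓞 K), H ∣ Qp m → ∀ b,
      ∑ x with x - b ∈ H.map (Ideal.Quotient.mk Q), P m x ≤
        1 / (Ideal.absNorm H : ℝ) *
          ∏ i ∈ (Finset.Icc 1 m).filter (fun i => p i ∣ H), (1 - δ i)⁻¹ := by
  intro m
  induction m with
  | zero =>
    intro _ H hH b
    rw [hQp0] at hH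
    have hc := card_map_mul_absNorm (Ideal.dvd_iff_le.1 (hH.trans (hQp0 ▸ hdvd 0 (Nat.zero_le _))))
    simp only [hP0, Finset.sum_const, nsmul_eq_mul, card_coset]
    rw [← hc]
    have h1 : (Nat.card (H.map (Ideal.Quotient.mk Q)) : ℝ) ≠ 0 := by
      exact_mod_cast Nat.card_pos.ne'
    push_cast
    simp
    field_simp
    exact le_rfl
  | succ m ih =>
    intro hm H hH b
    have hmJ : m + 1 ∈ Finset.Icc 1 J := by simp [hm]
    have ih := ih (by omega)
    have hone : ∀ i ∈ Finset.Icc 1 J, 1 ≤ (1 - δ i)⁻¹ := by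
      intro i hi
      obtain ⟨h1, h2⟩ := hδ i hi
      exact (one_le_inv₀ (by linarith)).2 (by linarith)
    have hHQ := hH.trans (hdvd _ hm)
    rw [hQps m hmJ] at hH
    obtain ⟨H', r, hH', -, rfl⟩ := exists_split (hp _ hmJ) hH
    have hdm : 0 ≤ (1 - δ (m + 1))⁻¹ := zero_le_one.trans (hone _ hmJ)
    rw [← Finset.insert_Icc_right_eq_Icc_add_one (by omega : 1 ≤ m + 1), Finset.filter_insert]
    rcases Nat.eq_zero_or_pos r with rfl | hr
    · simp only [pow_zero, mul_one] at hHQ ⊢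
      have hVH : (Qp m).map (Ideal.Quotient.mk Q) ≤ H'.map (Ideal.Quotient.mk Q) :=
        Ideal.map_mono (Ideal.dvd_iff_le.1 hH')
      have e1 := sum_coset_sum hVH (P (m + 1)) b
      have e2 := sum_coset_sum hVH (P m) b
      simp only [hfib m hmJ] at e1
      rw [e2] at e1
      have hc : (Nat.card ((Qp m).map (Ideal.Quotient.mk Q)) : ℝ) ≠ 0 := by
        exact_mod_cast Nat.card_pos.ne'
      rw [← mul_left_cancel₀ hc e1]
      refine (ih H' hH' b).trans ?_
      refine mul_le_mul_of_nonneg_left ?_ (by positivity)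
      split_ifs
      · rw [Finset.prod_insert (by simp)]
        refine le_mul_of_one_le_left (Finset.prod_nonneg fun i hi => ?_) (hone _ hmJ)
        simp only [Finset.mem_filter, Finset.mem_Icc] at hi
        exact zero_le_one.trans (hone i (Finset.mem_Icc.2 ⟨hi.1.1, by omega⟩))
      · exact le_rfl
    · have hpd : p (m + 1) ∣ H' * p (m + 1) ^ r := (dvd_pow_self _ hr.ne').mul_left _
      rw [if_pos hpd, Finset.prod_insert (by simp)]
      calc ∑ x with x - b ∈ (H' * p (m + 1) ^ r).map (Ideal.Quotient.mk Q), P (m + 1) x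
          ≤ ∑ x with x - b ∈ (H' * p (m + 1) ^ r).map (Ideal.Quotient.mk Q),
              (1 - δ (m + 1))⁻¹ * P m x := Finset.sum_le_sum fun x _ => hle m hmJ x
        _ = (1 - δ (m + 1))⁻¹ * ((∑ x with x - b ∈ H'.map (Ideal.Quotient.mk Q), P m x) /
              (Ideal.absNorm (p (m + 1) ^ r) : ℝ)) := by
            rw [← Finset.mul_sum, sum_coset_mul hQ0 hH' (hcop m hmJ r) hHQ _ (hper m (by omega))]
        _ ≤ (1 - δ (m + 1))⁻¹ * ((1 / (Ideal.absNorm H' : ℝ) *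
              ∏ i ∈ (Finset.Icc 1 m).filter (fun i => p i ∣ H'), (1 - δ i)⁻¹) /
              (Ideal.absNorm (p (m + 1) ^ r) : ℝ)) := by
            gcongr
            exact ih H' hH' b
        _ ≤ (1 - δ (m + 1))⁻¹ * ((1 / (Ideal.absNorm H' : ℝ) *
              ∏ i ∈ (Finset.Icc 1 m).filter (fun i => p i ∣ H' * p (m + 1) ^ r), (1 - δ i)⁻¹) /
              (Ideal.absNorm (p (m + 1) ^ r) : ℝ)) := by
            gcongr ?_ * (_ * ?_ / _)
            refine Finset.prod_le_prod_of_subset_of_one_le ?_ ?_ ?_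
            · intro i hi
              simp only [Finset.mem_filter] at hi ⊢
              exact ⟨hi.1, hi.2.mul_right _⟩
            · intro i hi
              simp only [Finset.mem_filter, Finset.mem_Icc] at hi
              exact zero_le_one.trans (hone i (Finset.mem_Icc.2 ⟨hi.1.1, by omega⟩))
            · intro i hi _
              simp only [Finset.mem_filter, Finset.mem_Icc] at hi
              exact hone i (Finset.mem_Icc.2 ⟨hi.1.1, by omega⟩)
        _ = _ := by
            rw [map_mul, Nat.cast_mul]
            simp only [div_eq_mul_inv, mul_inv]
            ring

end Distortion

/-! ### Bounding `α` and expanding its `k`-th power -/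

section Moment

variable {K : Type*} [Field K] [NumberField K] {Q : Ideal (𝓞 K)} [Fintype (𝓞 K ⧸ Q)]

/-- Union bound for the proportion of the fibre `x + V` covered by the classes
`a_i + H_i * p ^ r_i`, `i ∈ T`: such a class misses the fibre unless `x ≡ a_i` modulo `H_i`, and
then covers a proportion `N(p) ^ (-r_i)` of it. -/
lemma proportion_le {n : ℕ} (hQ0 : Q ≠ ⊥) {V p : Ideal (𝓞 K)} (T : Finset (Fin n))
    (a : Fin n → 𝓞 K) (Idl H : Fin n → Ideal (𝓞 K)) (r : Fin n → ℕ)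
    (hI : ∀ i ∈ T, Idl i = H i * p ^ r i) (hIQ : ∀ i ∈ T, Idl i ∣ Q) (hH : ∀ i ∈ T, H i ∣ V)
    (hcop : ∀ e, p ^ e ⊔ V = ⊤) (B : Finset (𝓞 K ⧸ Q))
    (hB : ∀ x ∈ B, ∃ i ∈ T,
      x - Ideal.Quotient.mk Q (a i) ∈ (Idl i).map (Ideal.Quotient.mk Q))
    (x : 𝓞 K ⧸ Q) :
    (((Finset.univ.filter fun y => y - x ∈ V.map (Ideal.Quotient.mk Q)) ∩ B).card : ℝ) /
        ((Finset.univ.filter fun y => y - x ∈ V.map (Ideal.Quotient.mk Q)).card : ℝ) ≤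
      ∑ i ∈ T, (if x - Ideal.Quotient.mk Q (a i) ∈ (H i).map (Ideal.Quotient.mk Q)
        then (1 : ℝ) else 0) * (1 / (Ideal.absNorm p : ℝ) ^ r i) := by
  set V' := V.map (Ideal.Quotient.mk Q) with hV'
  set S := Finset.univ.filter fun y => y - x ∈ V' with hS
  have hScard : (0 : ℝ) < S.card := by
    exact_mod_cast Finset.card_pos.2 ⟨x, by simp [hS]⟩
  rw [div_le_iff₀ hScard]
  have hcover : S ∩ B ⊆ T.biUnion fun i => S.filter fun y =>
      y - Ideal.Quotient.mk Q (a i) ∈ (Idl i).map (Ideal.Quotient.mk Q) := by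
    intro y hy
    obtain ⟨h1, h2⟩ := Finset.mem_inter.1 hy
    obtain ⟨i, hi, h3⟩ := hB y h2
    exact Finset.mem_biUnion.2 ⟨i, hi, Finset.mem_filter.2 ⟨h1, h3⟩⟩
  have hcard : ((S ∩ B).card : ℝ) ≤ ∑ i ∈ T, ((S.filter fun y =>
      y - Ideal.Quotient.mk Q (a i) ∈ (Idl i).map (Ideal.Quotient.mk Q)).card : ℝ) := by
    exact_mod_cast (Finset.card_le_card hcover).trans Finset.card_biUnion_le
  refine hcard.trans ?_
  rw [Finset.sum_mul]
  refine Finset.sum_le_sum fun i hi => ?_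
  set b := Ideal.Quotient.mk Q (a i) with hb
  -- Apply the coset-refinement identity to the indicator function of the fibre.
  have hg : ∀ y y', y' - y ∈ V' →
      (if y' ∈ S then (1 : ℝ) else 0) = if y ∈ S then (1 : ℝ) else 0 := by
    intro y y' h
    have : y' ∈ S ↔ y ∈ S := by
      simp only [hS, Finset.mem_filter, Finset.mem_univ, true_and]
      constructor
      · intro hy; simpa using V'.sub_mem hy h
      · intro hy; simpa using V'.add_mem h hy
    simp only [this]
  have key := sum_coset_mul hQ0 (hH i hi) (hcop (r i)) (hI i hi ▸ hIQ i hi) _ hg b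
  rw [← hI i hi] at key
  have hl : ((S.filter fun y => y - b ∈ (Idl i).map (Ideal.Quotient.mk Q)).card : ℝ) =
      ∑ y with y - b ∈ (Idl i).map (Ideal.Quotient.mk Q), (if y ∈ S then (1 : ℝ) else 0) := by
    rw [Finset.sum_boole, Finset.filter_filter]
    congr 2
    ext y
    simp [hS, and_comm]
  have hr : ∑ y with y - b ∈ (H i).map (Ideal.Quotient.mk Q), (if y ∈ S then (1 : ℝ) else 0) ≤
      (if x - b ∈ (H i).map (Ideal.Quotient.mk Q) then (1 : ℝ) else 0) * S.card := by
    rw [Finset.sum_boole, Finset.filter_filter]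
    split_ifs with h
    · rw [one_mul]
      have hsub : (Finset.univ.filter fun y =>
          y - b ∈ (H i).map (Ideal.Quotient.mk Q) ∧ y ∈ S) ⊆ S :=
        fun y hy => (Finset.mem_filter.1 hy).2.2
      exact_mod_cast Finset.card_le_card hsub
    · rw [zero_mul, Finset.filter_false_of_mem, Finset.card_empty, Nat.cast_zero]
      rintro y - ⟨h1, h2⟩
      apply h
      have h3 : y - x ∈ (H i).map (Ideal.Quotient.mk Q) :=
        Ideal.map_mono (Ideal.dvd_iff_le.1 (hH i hi)) (Finset.mem_filter.1 h2).2
      simpa using Ideal.sub_mem _ h1 h3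
  rw [hl, key, map_pow, Nat.cast_pow, div_eq_mul_one_div, mul_right_comm]
  exact mul_le_mul_of_nonneg_right hr (by positivity)

/-- Finitely many congruences modulo `H_l ∣ Q` are either incompatible or cut out a single coset
of `⨅ H_l`. -/
lemma sum_prod_indicator_le {k : ℕ} (H : Fin k → Ideal (𝓞 K)) (c : Fin k → 𝓞 K ⧸ Q)
    (hHQ : ∀ l, H l ∣ Q) (P : 𝓞 K ⧸ Q → ℝ) {M : ℝ} (hM : 0 ≤ M)
    (hcoset : ∀ b, ∑ x with x - b ∈ (⨅ l, H l).map (Ideal.Quotient.mk Q), P x ≤ M)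
    (hP : ∀ x, 0 ≤ P x) :
    ∑ x, (∏ l, if x - c l ∈ (H l).map (Ideal.Quotient.mk Q) then (1 : ℝ) else 0) * P x ≤ M := by
  have hprod : ∀ x, (∏ l, if x - c l ∈ (H l).map (Ideal.Quotient.mk Q) then (1 : ℝ) else 0) =
      if ∀ l, x - c l ∈ (H l).map (Ideal.Quotient.mk Q) then 1 else 0 := by
    intro x
    rw [Finset.prod_boole]
    simp
  simp only [hprod, ite_mul, one_mul, zero_mul]
  rw [← Finset.sum_filter]
  by_cases hex : ∃ b, ∀ l, b - c l ∈ (H l).map (Ideal.Quotient.mk Q)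
  · obtain ⟨b, hb⟩ := hex
    refine (Finset.sum_le_sum_of_subset_of_nonneg ?_ fun x _ _ => hP x).trans (hcoset b)
    intro x hx
    simp only [Finset.mem_filter, Finset.mem_univ, true_and] at hx ⊢
    obtain ⟨y, hy⟩ := Ideal.Quotient.mk_surjective (x - b)
    rw [← hy]
    refine Ideal.mem_map_of_mem _ ((Submodule.mem_iInf _).2 fun l => ?_)
    rw [← Ideal.mem_quotient_iff_mem (Ideal.dvd_iff_le.1 (hHQ l)), hy]
    simpa using Ideal.sub_mem _ (hx l) (hb l)
  · push Not at hex
    rw [Finset.filter_false_of_mem, Finset.sum_empty]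
    · exact hM
    · intro x _ h
      obtain ⟨l, hl⟩ := hex x
      exact hl (h l)

end Moment

/-- Bound for the `k`-th moment. -/
theorem kth_moment_bound
    {K : Type*} [Field K] [NumberField K]
    (n : ℕ) (hn : 0 < n)
    (a : Fin n → 𝓞 K) (Idl : Fin n → Ideal (𝓞 K))
    (hdist : ∀ i : Fin n, Distinguishable (Idl i))
    (hmono : ∀ i j : Fin n, i ≤ j → Ideal.absNorm (Idl i) ≤ Ideal.absNorm (Idl j))
    (s : ℕ)
    (hsle : ∀ I₀ : Ideal (𝓞 K), (Finset.univ.filter fun i : Fin n => Idl i = I₀).card ≤ s)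
    (hseq : ∃ I₀ : Ideal (𝓞 K), (Finset.univ.filter fun i : Fin n => Idl i = I₀).card = s)
    (Q : Ideal (𝓞 K)) (hQ : Q = ⨅ i : Fin n, Idl i)
    (J : ℕ) (p : ℕ → Ideal (𝓞 K)) (ν : ℕ → ℕ)
    (hp : ∀ j ∈ Finset.Icc 1 J, (p j).IsPrime)
    (hν : ∀ j ∈ Finset.Icc 1 J, 1 ≤ ν j)
    (hpinj : ∀ j ∈ Finset.Icc 1 J, ∀ j' ∈ Finset.Icc 1 J, p j = p j' → j = j')
    (hfact : Q = ∏ j ∈ Finset.Icc 1 J, p j ^ ν j)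
    (hpmono : ∀ j ∈ Finset.Icc 1 J, ∀ j' ∈ Finset.Icc 1 J, j ≤ j' →
      Ideal.absNorm (p j) ≤ Ideal.absNorm (p j'))
    (Qp : ℕ → Ideal (𝓞 K)) (hQp : ∀ j : ℕ, Qp j = ∏ i ∈ Finset.Icc 1 j, p i ^ ν i)
    [Fintype (𝓞 K ⧸ Q)]
    (B : ℕ → Finset (𝓞 K ⧸ Q))
    (hB : ∀ j ∈ Finset.Icc 1 J, B j = Finset.univ.filter fun x : 𝓞 K ⧸ Q =>
      ∃ i : Fin n, IsPmin (Idl i) (p j) ∧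
        x - Ideal.Quotient.mk Q (a i) ∈ (Idl i).map (Ideal.Quotient.mk Q))
    (F : ℕ → (𝓞 K ⧸ Q) → Finset (𝓞 K ⧸ Q))
    (hF : ∀ (j : ℕ) (x : 𝓞 K ⧸ Q),
      F j x = Finset.univ.filter fun x' : 𝓞 K ⧸ Q => x' - x ∈ (Qp j).map (Ideal.Quotient.mk Q))
    (α : ℕ → (𝓞 K ⧸ Q) → ℝ)
    (hα : ∀ j ∈ Finset.Icc 1 J, ∀ x : 𝓞 K ⧸ Q,
      α j x = ((F (j - 1) x ∩ B j).card : ℝ) / ((F (j - 1) x).card : ℝ))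
    (δ : ℕ → ℝ) (hδ : ∀ j ∈ Finset.Icc 1 J, δ j ∈ Set.Icc (0 : ℝ) (1 / 2))
    (P : ℕ → (𝓞 K ⧸ Q) → ℝ)
    (hP0 : ∀ x : 𝓞 K ⧸ Q, P 0 x = 1 / (Fintype.card (𝓞 K ⧸ Q) : ℝ))
    (hPrec : ∀ j ∈ Finset.Icc 1 J, ∀ x : 𝓞 K ⧸ Q,
      P j x = if α j x < δ j then (if x ∈ B j then 0 else P (j - 1) x / (1 - α j x))
        else if α j x = 0 then P (j - 1) x
        else P (j - 1) x * (α j x - (if x ∈ B j then δ j else 0)) / (α j x * (1 - δ j)))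
    (k : ℕ) (hk : 1 ≤ k) (j : ℕ) (hj : j ∈ Finset.Icc 1 J) :
    ∑ x : 𝓞 K ⧸ Q, (α j x) ^ k * P (j - 1) x ≤
      (s : ℝ) ^ k *
        ∑ r ∈ Fintype.piFinset (fun _ : Fin k => Finset.Icc 1 (ν j)),
          ∑' H : Fin k → Ideal (𝓞 K),
            (if ∀ ℓ : Fin k, H ℓ ∣ Qp (j - 1) ∧
                Ideal.absNorm (Idl ⟨0, hn⟩) ≤ Ideal.absNorm (H ℓ * p j ^ r ℓ)
             then (1 / ((Ideal.absNorm (⨅ ℓ : Fin k, H ℓ) : ℝ) *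
                    (Ideal.absNorm (p j) : ℝ) ^ (∑ ℓ : Fin k, r ℓ))) *
                  ∏ i ∈ (Finset.Icc 1 (j - 1)).filter (fun i => p i ∣ ⨅ ℓ : Fin k, H ℓ),
                    (1 - δ i)⁻¹
             else 0) := by
  have hQ0 : Q ≠ ⊥ := by
    rw [Ne, ← Ideal.absNorm_eq_zero_iff]
    exact (Ideal.absNorm_ne_zero_iff Q).2 inferInstance
  have hpdvd : ∀ i ∈ Finset.Icc 1 J, p i ∣ Q := fun i hi => by
    rw [hfact]
    exact (dvd_pow_self _ (by have := hν i hi; omega)).trans (Finset.dvd_prod_of_mem _ hi)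
  have hp0 : ∀ i ∈ Finset.Icc 1 J, p i ≠ ⊥ := fun i hi h => by
    have := hpdvd i hi
    rw [h] at this
    exact hQ0 (zero_dvd_iff.1 this)
  have hpp : ∀ i ∈ Finset.Icc 1 J, Prime (p i) := fun i hi =>
    Ideal.prime_of_isPrime (hp0 i hi) (hp i hi)
  have hQp0 : Qp 0 = ⊤ := by rw [hQp]; simp [Ideal.one_eq_top]
  have hQps : ∀ m, Qp (m + 1) = Qp m * p (m + 1) ^ ν (m + 1) := fun m => by
    rw [hQp, hQp, Finset.prod_Icc_succ_top (by omega)]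
  have hcop : ∀ m, m + 1 ∈ Finset.Icc 1 J → ∀ r, p (m + 1) ^ r ⊔ Qp m = ⊤ := by
    intro m hm r
    rw [hQp]
    refine Ideal.sup_prod_eq_top fun i hi => ?_
    simp only [Finset.mem_Icc] at hi hm
    have hiJ : i ∈ Finset.Icc 1 J := Finset.mem_Icc.2 ⟨hi.1, by omega⟩
    have hmJ : m + 1 ∈ Finset.Icc 1 J := Finset.mem_Icc.2 hm
    refine Ideal.pow_sup_pow_eq_top ?_
    refine Ideal.IsMaximal.coprime_of_ne ((hp _ hmJ).isMaximal (hp0 _ hmJ))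
      ((hp _ hiJ).isMaximal (hp0 _ hiJ)) fun h => ?_
    have := hpinj _ hmJ _ hiJ h
    omega
  have hQJ : Qp J = Q := by rw [hQp, hfact]
  have hdvd : ∀ m ≤ J, Qp m ∣ Q := by
    intro m hm
    rw [hQp, hfact]
    exact Finset.prod_dvd_prod_of_subset _ _ _ (Finset.Icc_subset_Icc_right hm)
  have hIQ : ∀ i, Idl i ∣ Q := fun i => by
    rw [Ideal.dvd_iff_le, hQ]; exact iInf_le _ i
  -- Primes `p_i` with `i > m` are too large to divide an ideal whose largest prime is `p_m`.
  have hIQm : ∀ m ∈ Finset.Icc 1 J, ∀ i, IsPmin (Idl i) (p m) → Idl i ∣ Qp m := by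
    intro m hm i hi
    have hsplit : Q = (∏ t ∈ Finset.Ioc m J, p t ^ ν t) * Qp m := by
      rw [hfact, hQp, mul_comm]
      have : Finset.Icc 1 J = Finset.Icc 1 m ∪ Finset.Ioc m J := by
        ext t; simp only [Finset.mem_union, Finset.mem_Icc, Finset.mem_Ioc] at hm ⊢; omega
      rw [this, Finset.prod_union]
      rw [Finset.disjoint_left]
      intro t h1 h2
      simp only [Finset.mem_Icc, Finset.mem_Ioc] at h1 h2
      omega
    have hco : IsCoprime (Idl i) (∏ t ∈ Finset.Ioc m J, p t ^ ν t) := by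
      refine IsCoprime.prod_right fun t ht => IsCoprime.pow_right ?_
      simp only [Finset.mem_Ioc] at ht
      simp only [Finset.mem_Icc] at hm
      have htJ : t ∈ Finset.Icc 1 J := Finset.mem_Icc.2 ⟨by omega, ht.2⟩
      have hmJ : m ∈ Finset.Icc 1 J := Finset.mem_Icc.2 hm
      rw [Ideal.isCoprime_iff_sup_eq, sup_comm]
      by_contra hne
      have hmax := (hp t htJ).isMaximal (hp0 t htJ)
      have heq := hmax.eq_of_le hne le_sup_left
      have hd : p t ∣ Idl i := by
        rw [Ideal.dvd_iff_le, heq]; exact le_sup_right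
      have hlt := hi.2.2 (p t) (hp t htJ) hd fun h => by
        have := hpinj _ htJ _ hmJ h; omega
      exact absurd (hpmono m hmJ t htJ ht.1.le) (not_le.2 hlt)
    exact hco.dvd_of_dvd_mul_left (hsplit ▸ hIQ i)
  have hstep : ∀ m, m + 1 ∈ Finset.Icc 1 J →
      (∀ x x', x' - x ∈ (Qp m).map (Ideal.Quotient.mk Q) → P m x' = P m x) →
      (∀ x, 0 ≤ P m x) → _ := fun m hm h1 h2 =>
    distortion_step ((Qp m).map (Ideal.Quotient.mk Q)) (B (m + 1)) (P m) (P (m + 1))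
      (α (m + 1)) (δ (m + 1)) (hδ _ hm)
      (fun x => by rw [hα _ hm, Nat.add_sub_cancel, hF])
      (fun x => by rw [hPrec _ hm, Nat.add_sub_cancel]) h1 h2
  have hPprop : ∀ m ≤ J,
      (∀ x x', x' - x ∈ (Qp m).map (Ideal.Quotient.mk Q) → P m x' = P m x) ∧
        ∀ x, 0 ≤ P m x := by
    intro m
    induction m with
    | zero =>
      intro _
      refine ⟨fun x x' _ => by rw [hP0, hP0], fun x => by rw [hP0]; positivity⟩
    | succ m ih =>
      intro hm
      have hmJ : m + 1 ∈ Finset.Icc 1 J := by simp [hm]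
      obtain ⟨ih1, ih2⟩ := ih (by omega)
      obtain ⟨hαper, hnn, -, -⟩ := hstep m hmJ ih1 ih2
      refine ⟨fun x x' h => ?_, hnn⟩
      have hmap : (Qp (m + 1)).map (Ideal.Quotient.mk Q) ≤ (Qp m).map (Ideal.Quotient.mk Q) :=
        Ideal.map_mono (by rw [hQps]; exact Ideal.mul_le_left)
      have hBper : x' ∈ B (m + 1) ↔ x ∈ B (m + 1) := by
        rw [hB _ hmJ]
        simp only [Finset.mem_filter, Finset.mem_univ, true_and]
        refine exists_congr fun i => and_congr_right fun hi => ?_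
        have h' : x' - x ∈ (Idl i).map (Ideal.Quotient.mk Q) :=
          Ideal.map_mono (Ideal.dvd_iff_le.1 (hIQm _ hmJ i hi)) h
        constructor
        · intro h2; simpa using Ideal.sub_mem _ h2 h'
        · intro h2; simpa using Ideal.add_mem _ h' h2
      rw [hPrec _ hmJ, hPrec _ hmJ, Nat.add_sub_cancel, hαper x x' (hmap h), ih1 x x' (hmap h)]
      simp only [hBper]
  have hmeas := measure_coset_le hQ0 hpp Qp hQp0 (fun m _ => hQps m) hcop hdvd hδ hP0
    (fun m hm => (hPprop m hm).1)
    (fun m hm => (hstep m hm (hPprop m (by simp at hm; omega)).1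
      (hPprop m (by simp at hm; omega)).2).2.2.1)
    (fun m hm => (hstep m hm (hPprop m (by simp at hm; omega)).1
      (hPprop m (by simp at hm; omega)).2).2.2.2)
  obtain ⟨m, rfl⟩ : ∃ m, j = m + 1 := ⟨j - 1, by simp at hj; omega⟩
  have hmJ : m ≤ J := by simp at hj; omega
  simp only [Nat.add_sub_cancel]
  set T := Finset.univ.filter fun i => IsPmin (Idl i) (p (m + 1)) with hT
  have hdec : ∀ i, ∃ H r, i ∈ T →
      Idl i = H * p (m + 1) ^ r ∧ H ∣ Qp m ∧ r ∈ Finset.Icc 1 (ν (m + 1)) := by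
    intro i
    by_cases hi : i ∈ T
    · have hi' : IsPmin (Idl i) (p (m + 1)) := by simpa [hT] using hi
      have h := hIQm _ hj i hi'
      rw [hQps] at h
      obtain ⟨H, r, hH, hr, hI⟩ := exists_split (hpp _ hj) h
      refine ⟨H, r, fun _ => ⟨hI, hH, Finset.mem_Icc.2 ⟨?_, hr⟩⟩⟩
      by_contra hr0
      obtain rfl : r = 0 := by omega
      have hd : p (m + 1) ∣ Qp m := by
        refine dvd_trans ?_ hH
        have := hi'.2.1
        rwa [hI, pow_zero, mul_one] at this
      have hc := hcop m hj 1
      rw [pow_one, sup_eq_left.2 (Ideal.dvd_iff_le.1 hd)] at hc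
      exact (hp _ hj).ne_top hc
    · exact ⟨⊤, 0, fun h => absurd h hi⟩
  choose Hf rf hHr using hdec
  have hαle : ∀ x, α (m + 1) x ≤ ∑ i ∈ T,
      (if x - Ideal.Quotient.mk Q (a i) ∈ (Hf i).map (Ideal.Quotient.mk Q)
        then (1 : ℝ) else 0) * (1 / (Ideal.absNorm (p (m + 1)) : ℝ) ^ rf i) := by
    intro x
    rw [hα _ hj, Nat.add_sub_cancel, hF]
    refine proportion_le hQ0 T a Idl Hf rf (fun i hi => (hHr i hi).1) (fun i _ => hIQ i)
      (fun i hi => (hHr i hi).2.1) (hcop m hj) _ ?_ x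
    intro y hy
    rw [hB _ hj] at hy
    obtain ⟨i, hi, h⟩ := (Finset.mem_filter.1 hy).2
    exact ⟨i, by simpa [hT] using hi, h⟩
  have hα0 : ∀ x, 0 ≤ α (m + 1) x := fun x => by rw [hα _ hj]; positivity
  obtain ⟨-, hPnn⟩ := hPprop m hmJ
  -- The summand of the target, as a function of the exponents and the ideals.
  set W : (Fin k → ℕ) × (Fin k → Ideal (𝓞 K)) → ℝ := fun rH =>
    (1 / ((Ideal.absNorm (⨅ l, rH.2 l) : ℝ) *
      (Ideal.absNorm (p (m + 1)) : ℝ) ^ (∑ l, rH.1 l))) *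
      ∏ i ∈ (Finset.Icc 1 m).filter (fun i => p i ∣ ⨅ l, rH.2 l), (1 - δ i)⁻¹ with hW
  have hCnn : ∀ H : Ideal (𝓞 K),
      0 ≤ ∏ i ∈ (Finset.Icc 1 m).filter (fun i => p i ∣ H), (1 - δ i)⁻¹ := by
    intro H
    refine Finset.prod_nonneg fun i hi => inv_nonneg.2 ?_
    simp only [Finset.mem_filter, Finset.mem_Icc] at hi
    have := (hδ i (Finset.mem_Icc.2 ⟨hi.1.1, by omega⟩)).2
    linarith
  have hWnn : ∀ rH, 0 ≤ W rH := fun rH => mul_nonneg (by positivity) (hCnn _)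
  set φ : (Fin k → Fin n) → (Fin k → ℕ) × (Fin k → Ideal (𝓞 K)) :=
    fun t => (fun l => rf (t l), fun l => Hf (t l)) with hφ
  have hexpand : ∑ x, (α (m + 1) x) ^ k * P m x ≤
      ∑ t ∈ Fintype.piFinset (fun _ : Fin k => T), W (φ t) := by
    calc ∑ x, (α (m + 1) x) ^ k * P m x
        ≤ ∑ x, (∑ i ∈ T,
          (if x - Ideal.Quotient.mk Q (a i) ∈ (Hf i).map (Ideal.Quotient.mk Q)
            then (1 : ℝ) else 0) * (1 / (Ideal.absNorm (p (m + 1)) : ℝ) ^ rf i)) ^ k * P m x :=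
          Finset.sum_le_sum fun x _ => mul_le_mul_of_nonneg_right
            (pow_le_pow_left₀ (hα0 x) (hαle x) k) (hPnn x)
      _ = ∑ t ∈ Fintype.piFinset (fun _ : Fin k => T),
          (∏ l, (1 / (Ideal.absNorm (p (m + 1)) : ℝ) ^ rf (t l))) *
            ∑ x, (∏ l, if x - Ideal.Quotient.mk Q (a (t l)) ∈
              (Hf (t l)).map (Ideal.Quotient.mk Q) then (1 : ℝ) else 0) * P m x := by
          simp only [Finset.sum_pow', Finset.sum_mul]
          rw [Finset.sum_comm]
          refine Finset.sum_congr rfl fun t _ => ?_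
          rw [Finset.mul_sum]
          refine Finset.sum_congr rfl fun x _ => ?_
          rw [Finset.prod_mul_distrib]
          ring
      _ ≤ ∑ t ∈ Fintype.piFinset (fun _ : Fin k => T), W (φ t) := by
          refine Finset.sum_le_sum fun t ht => ?_
          have htT : ∀ l, t l ∈ T := fun l => Fintype.mem_piFinset.1 ht l
          have hinf : (⨅ l, Hf (t l)) ∣ Qp m := Ideal.dvd_iff_le.2
            (le_iInf fun l => Ideal.dvd_iff_le.1 (hHr _ (htT l)).2.1)
          have hb := sum_prod_indicator_le (fun l => Hf (t l))
            (fun l => Ideal.Quotient.mk Q (a (t l)))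
            (fun l => (hHr _ (htT l)).2.1.trans (hdvd m hmJ)) (P m)
            (mul_nonneg (by positivity) (hCnn (⨅ l, Hf (t l))))
            (hmeas m hmJ _ hinf) hPnn
          refine (mul_le_mul_of_nonneg_left hb
            (Finset.prod_nonneg fun l _ => by positivity)).trans (le_of_eq ?_)
          simp only [hW, hφ, one_div, Finset.prod_inv_distrib, Finset.prod_pow_eq_pow_sum,
            mul_inv]
          ring
  refine hexpand.trans ?_
  have hQpm0 : Qp m ≠ ⊥ := fun h => by
    have := hdvd m hmJ
    rw [h] at this
    exact hQ0 (zero_dvd_iff.1 this)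
  have hfin : {H : Ideal (𝓞 K) | H ∣ Qp m}.Finite := by
    refine (Ideal.finite_setOfPred_absNorm_le (S := 𝓞 K) (Ideal.absNorm (Qp m))).subset ?_
    intro H hH
    refine Nat.le_of_dvd (Nat.pos_of_ne_zero ?_) (map_dvd Ideal.absNorm hH)
    rwa [Ne, Ideal.absNorm_eq_zero_iff]
  set D := hfin.toFinset with hD
  have htsum : ∀ r : Fin k → ℕ,
      (∑' H : Fin k → Ideal (𝓞 K),
        (if ∀ l, H l ∣ Qp m ∧
            Ideal.absNorm (Idl ⟨0, hn⟩) ≤ Ideal.absNorm (H l * p (m + 1) ^ r l)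
          then W (r, H) else 0)) =
      ∑ H ∈ Fintype.piFinset (fun _ : Fin k => D),
        (if ∀ l, H l ∣ Qp m ∧
            Ideal.absNorm (Idl ⟨0, hn⟩) ≤ Ideal.absNorm (H l * p (m + 1) ^ r l)
          then W (r, H) else 0) := by
    intro r
    refine tsum_eq_sum fun H hH => if_neg fun h => hH ?_
    exact Fintype.mem_piFinset.2 fun l => by simpa [hD] using (h l).1
  have hrhs := Finset.sum_congr (rfl : Fintype.piFinset (fun _ : Fin k =>
    Finset.Icc 1 (ν (m + 1))) = _) fun r _ => htsum r
  refine le_of_le_of_eq ?_ (congrArg (fun z => (s : ℝ) ^ k * z) hrhs.symm)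
  rw [← Finset.sum_product', ← Finset.sum_filter, Finset.sum_comp W φ, Finset.mul_sum]
  -- A pair `(H, r)` determines the ideals `I_{t_l}`, so at most `s ^ k` tuples `t` produce it.
  have hfibre : ∀ rH, ((Fintype.piFinset (fun _ : Fin k => T)).filter
      fun t => φ t = rH).card ≤ s ^ k := by
    intro rH
    refine (Finset.card_le_card (t := Fintype.piFinset fun l : Fin k =>
      Finset.univ.filter fun i => Idl i = rH.2 l * p (m + 1) ^ rH.1 l) ?_).trans ?_
    · intro t ht
      obtain ⟨h1, rfl⟩ := Finset.mem_filter.1 ht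
      exact Fintype.mem_piFinset.2 fun l => Finset.mem_filter.2
        ⟨Finset.mem_univ _, (hHr _ (Fintype.mem_piFinset.1 h1 l)).1⟩
    · rw [Fintype.card_piFinset]
      refine (Finset.prod_le_prod' fun l _ => hsle _).trans ?_
      simp
  calc ∑ rH ∈ Finset.image φ (Fintype.piFinset fun _ => T),
        ((Fintype.piFinset fun _ => T).filter fun t => φ t = rH).card • W rH
      ≤ ∑ rH ∈ Finset.image φ (Fintype.piFinset fun _ => T), (s : ℝ) ^ k * W rH := by
        refine Finset.sum_le_sum fun rH _ => ?_
        rw [nsmul_eq_mul]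
        exact mul_le_mul_of_nonneg_right (by exact_mod_cast hfibre rH) (hWnn _)
    _ ≤ _ := by
        refine Finset.sum_le_sum_of_subset_of_nonneg ?_
          fun rH _ _ => mul_nonneg (by positivity) (hWnn _)
        intro rH hrH
        obtain ⟨t, ht, rfl⟩ := Finset.mem_image.1 hrH
        have h := fun l => hHr _ (Fintype.mem_piFinset.1 ht l)
        refine Finset.mem_filter.2 ⟨Finset.mem_product.2
          ⟨Fintype.mem_piFinset.2 fun l => (h l).2.2,
            Fintype.mem_piFinset.2 fun l => by simpa [hD] using (h l).2.1⟩, fun l => ⟨(h l).2.1, ?_⟩⟩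
        change _ ≤ Ideal.absNorm (Hf (t l) * p (m + 1) ^ rf (t l))
        rw [← (h l).1]
        exact hmono _ _ (Fin.mk_le_of_le_val (Nat.zero_le _))
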